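/- arXiv:1811.02696 — 4 statements merged into one kernel-verified Lean document; each statement's English description precedes it below -/
import Mathlib

section
/- Deterministic Intra-option Policy Gradient (Theorem 1): for every parameter θ ∈ ℝ^d and every initial state–option pair (s₀, ω₀), the series defining ρ_Ω^θ((s₀,ω₀),(s,ω)) = ∑_{k=0}^∞ P^k_θ((s₀,ω₀),(s,ω)) converges, and the Fréchet derivative of θ ↦ Q_Ω θ s₀ ω₀ equals ∑_{(s,ω) ∈ S×Ω} ρ_Ω^θ((s₀,ω₀),(s,ω)) • ( (D_a Q_U θ s ω a |_{a = μ θ ω s}) ∘ (D_θ (μ · ω s) at θ) ), where D denotes the Fréchet derivative and ∘ is composition of the continuous linear maps ℝ^d → A → ℝ. -/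
/-!
Write `D (s, ω)` for the derivative of `θ ↦ QΩ θ s ω`, and `g (s, ω)` for the composite
`D_a QU ∘ D_θ μ`. Differentiating the Bellman equations by the product and chain rules gives the
fixed-point equation `D = g + K D`, where `K` is the discounted augmented kernel
(`bellman_fderiv`): the terms in which `p` and `r` are differentiated make up `g`, and those in
which `U` is differentiated make up `K D`.

Since `K` is nonnegative with row sums at most `γ < 1`, its `n`-th power has entries bounded by
`γ ^ n`, so the Neumann series `∑ K ^ n` converges entrywise. Iterating the fixed-point equation
yields `D = ∑_{k < n} K ^ k g + K ^ n D`, and the remainder tends to zero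
(`neumann_series_of_fixed_point`).
-/

section Neumann

variable {X : Type*} [Fintype X] {E : Type*} [NormedAddCommGroup E] [NormedSpace ℝ E]
  {K : X → X → ℝ} {Kk : ℕ → X → X → ℝ}

lemma iterate_kernel_smul (hS : ∀ k x y, Kk (k + 1) x y = ∑ z, K x z * Kk k z y)
    (f : X → E) (n : ℕ) (x : X) :
    ∑ y, Kk (n + 1) x y • f y = ∑ z, K x z • ∑ y, Kk n z y • f y := by
  simp_rw [hS, Finset.sum_smul, Finset.smul_sum, mul_smul]
  exact Finset.sum_comm

lemma iterate_kernel_bounds [DecidableEq X] {γ : ℝ}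
    (hK : ∀ x y, 0 ≤ K x y) (hrow : ∀ x, ∑ y, K x y ≤ γ)
    (h0 : ∀ x y, Kk 0 x y = if x = y then 1 else 0)
    (hS : ∀ k x y, Kk (k + 1) x y = ∑ z, K x z * Kk k z y) (hγ : 0 ≤ γ) (n : ℕ) :
    ∀ x y, 0 ≤ Kk n x y ∧ Kk n x y ≤ γ ^ n := by
  induction n with
  | zero =>
    intro x y
    rw [h0]
    split_ifs <;> simp
  | succ n ih =>
    intro x y
    rw [hS]
    refine ⟨Finset.sum_nonneg fun z _ => mul_nonneg (hK x z) (ih z y).1, ?_⟩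
    calc ∑ z, K x z * Kk n z y ≤ ∑ z, K x z * γ ^ n :=
          Finset.sum_le_sum fun z _ => mul_le_mul_of_nonneg_left (ih z y).2 (hK x z)
      _ = (∑ z, K x z) * γ ^ n := by rw [Finset.sum_mul]
      _ ≤ γ * γ ^ n := mul_le_mul_of_nonneg_right (hrow x) (pow_nonneg hγ n)
      _ = γ ^ (n + 1) := by ring

/-- For a nonnegative kernel with row sums at most `γ < 1`, the Neumann series converges and
gives the solution of the fixed-point equation `D = g + K D`. -/
lemma neumann_series_of_fixed_point [DecidableEq X] {γ : ℝ}
    (hK : ∀ x y, 0 ≤ K x y) (hrow : ∀ x, ∑ y, K x y ≤ γ)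
    (h0 : ∀ x y, Kk 0 x y = if x = y then 1 else 0)
    (hS : ∀ k x y, Kk (k + 1) x y = ∑ z, K x z * Kk k z y) (hγ : 0 ≤ γ) (hγ1 : γ < 1)
    (D g : X → E) (hD : ∀ x, D x = g x + ∑ y, K x y • D y) (x : X) :
    (∀ y, Summable fun k => Kk k x y) ∧ D x = ∑ y, (∑' k, Kk k x y) • g y := by
  have hb := iterate_kernel_bounds hK hrow h0 hS hγ
  have hsum : ∀ y, Summable fun k => Kk k x y := fun y =>
    Summable.of_nonneg_of_le (fun k => (hb k x y).1) (fun k => (hb k x y).2)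
      (summable_geometric_of_lt_one hγ hγ1)
  refine ⟨hsum, ?_⟩
  have hzero : ∀ (f : X → E) x, ∑ y, Kk 0 x y • f y = f x := by
    intro f x
    simp [h0]
  have hstep : ∀ n x, ∑ y, Kk n x y • D y =
      ∑ y, Kk n x y • g y + ∑ y, Kk (n + 1) x y • D y := by
    intro n
    induction n with
    | zero =>
      intro x
      rw [iterate_kernel_smul hS, hzero, hzero]
      simp_rw [hzero]
      exact hD x
    | succ n ih =>
      intro x
      rw [iterate_kernel_smul hS D n, iterate_kernel_smul hS g n,
        iterate_kernel_smul hS D (n + 1), ← Finset.sum_add_distrib]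
      exact Finset.sum_congr rfl fun z _ => by rw [ih z, smul_add]
  have hpartial : ∀ n, D x = ∑ k ∈ Finset.range n, ∑ y, Kk k x y • g y +
      ∑ y, Kk n x y • D y := by
    intro n
    induction n with
    | zero => simp [hzero]
    | succ n ih => rw [Finset.sum_range_succ, add_assoc, ← hstep]; exact ih
  have hmain : HasSum (fun k => ∑ y, Kk k x y • g y) (∑ y, (∑' k, Kk k x y) • g y) :=
    hasSum_sum fun y _ => (hsum y).hasSum.smul_const (g y)
  have hrem : Filter.Tendsto (fun n => ∑ y, Kk n x y • D y) Filter.atTop (nhds 0) := by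
    have := tendsto_finsetSum (Finset.univ : Finset X) fun y _ =>
      (hsum y).tendsto_atTop_zero.smul_const (D y)
    simpa using this
  have hlim := hmain.tendsto_sum_nat.add hrem
  rw [add_zero] at hlim
  exact tendsto_nhds_unique (tendsto_const_nhds.congr hpartial) hlim

end Neumann

/-- The derivative of `q θ = r (m θ) + γ ∑ s', p (m θ) s' * u θ s'` splits into the part through
the action `m θ`, with `u` frozen at `θ`, and the part through `u`. -/
lemma bellman_fderiv {S : Type*} [Fintype S] {A E : Type*}
    [NormedAddCommGroup A] [NormedSpace ℝ A] [NormedAddCommGroup E] [NormedSpace ℝ E]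
    {r : A → ℝ} {p : A → S → ℝ} {m : E → A} {u : E → S → ℝ} (γ : ℝ)
    (hr : Differentiable ℝ r) (hp : ∀ s, Differentiable ℝ fun a => p a s)
    (hm : Differentiable ℝ m) (hu : ∀ s, Differentiable ℝ fun θ => u θ s) (θ : E) :
    fderiv ℝ (fun θ' => r (m θ') + γ * ∑ s, p (m θ') s * u θ' s) θ =
      (fderiv ℝ (fun a => r a + γ * ∑ s, p a s * u θ s) (m θ)).comp (fderiv ℝ m θ) +
        ∑ s, (γ * p (m θ) s) • fderiv ℝ (fun θ' => u θ' s) θ := by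
  have hm' := (hm θ).hasFDerivAt
  have hr' := (hr (m θ)).hasFDerivAt
  have hp' := fun s => (hp s (m θ)).hasFDerivAt
  have hu' := fun s => (hu s θ).hasFDerivAt
  have h1 := (hr'.comp θ hm').add ((HasFDerivAt.fun_sum (u := Finset.univ) fun s _ =>
    ((hp' s).comp θ hm').mul (hu' s)).const_mul γ)
  have h2 := hr'.add ((HasFDerivAt.fun_sum (u := Finset.univ) fun s _ =>
    (hp' s).mul_const (u θ s)).const_mul γ)
  refine (HasFDerivAt.fderiv h1).trans ?_
  have e2 := HasFDerivAt.fderiv h2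
  refine Eq.trans ?_ (congrArg (fun L => ContinuousLinearMap.comp L (fderiv ℝ m θ) +
    ∑ s, (γ * p (m θ) s) • fderiv ℝ (fun θ' => u θ' s) θ) e2).symm
  ext v
  simp [Finset.sum_add_distrib, Finset.mul_sum, mul_add, mul_assoc]
  ring

/-- **Deterministic Intra-option Policy Gradient (Theorem 1).**
For every parameter `θ` and every initial state–option pair `(s₀, ω₀)`, the series defining
`ρ_Ω` converges, and the Fréchet derivative of `θ ↦ Q_Ω θ s₀ ω₀` equals
`∑ (s,ω), ρ_Ω ((s₀,ω₀),(s,ω)) • ((D_a Q_U θ s ω a |_{a = μ θ ω s}) ∘ D_θ (μ · ω s))`. -/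
theorem deterministic_intra_option_policy_gradient
    {S : Type*} {Ω : Type*} [Fintype S] [Fintype Ω] [Nonempty S] [Nonempty Ω]
    [DecidableEq S] [DecidableEq Ω]
    {A : Type*} [NormedAddCommGroup A] [NormedSpace ℝ A] [FiniteDimensional ℝ A]
    (d : ℕ)
    (p : S → A → S → ℝ)
    (hp_nonneg : ∀ s a s', 0 ≤ p s a s')
    (hp_sum : ∀ s a, ∑ s', p s a s' = 1)
    (r : S → A → ℝ)
    (γ : ℝ) (hγ0 : 0 ≤ γ) (hγ1 : γ < 1)
    (πΩ : S → Ω → ℝ)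
    (hπ_nonneg : ∀ s ω, 0 ≤ πΩ s ω)
    (hπ_sum : ∀ s, ∑ ω, πΩ s ω = 1)
    (β : Ω → S → ℝ)
    (hβ0 : ∀ ω s, 0 ≤ β ω s) (hβ1 : ∀ ω s, β ω s ≤ 1)
    (μ : (Fin d → ℝ) → Ω → S → A)
    (hμ_diff : ∀ ω s, Differentiable ℝ (fun θ => μ θ ω s))
    (hr_diff : ∀ s, Differentiable ℝ (fun a => r s a))
    (hp_diff : ∀ s s', Differentiable ℝ (fun a => p s a s'))
    (QΩ : (Fin d → ℝ) → S → Ω → ℝ)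
    (QU : (Fin d → ℝ) → S → Ω → A → ℝ)
    (U : (Fin d → ℝ) → Ω → S → ℝ)
    (VΩ : (Fin d → ℝ) → S → ℝ)
    (hQΩ : ∀ θ s ω, QΩ θ s ω = QU θ s ω (μ θ ω s))
    (hQU : ∀ θ s ω a, QU θ s ω a = r s a + γ * ∑ s', p s a s' * U θ ω s')
    (hU : ∀ θ ω s', U θ ω s' = (1 - β ω s') * QΩ θ s' ω + β ω s' * VΩ θ s')
    (hVΩ : ∀ θ s, VΩ θ s = ∑ ω, πΩ s ω * QΩ θ s ω)
    (hQΩ_diff : ∀ s ω, Differentiable ℝ (fun θ => QΩ θ s ω))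
    (hU_diff : ∀ ω s, Differentiable ℝ (fun θ => U θ ω s))
    (hQU_diff : ∀ θ s ω, Differentiable ℝ (fun a => QU θ s ω a))
    (P1 : (Fin d → ℝ) → (S × Ω) → (S × Ω) → ℝ)
    (hP1 : ∀ θ s ω s' ω', P1 θ (s, ω) (s', ω') =
      γ * p s (μ θ ω s) s' *
        ((1 - β ω s') * (if ω' = ω then (1 : ℝ) else 0) + β ω s' * πΩ s' ω'))
    (Pk : (Fin d → ℝ) → ℕ → (S × Ω) → (S × Ω) → ℝ)
    (hPk0 : ∀ θ s ω s' ω', Pk θ 0 (s, ω) (s', ω') =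
      if s = s' ∧ ω = ω' then (1 : ℝ) else 0)
    (hPkS : ∀ θ k x y, Pk θ (k + 1) x y = ∑ z : S × Ω, P1 θ x z * Pk θ k z y)
    (θ : Fin d → ℝ) (s₀ : S) (ω₀ : Ω) :
    (∀ x : S × Ω, Summable (fun k : ℕ => Pk θ k (s₀, ω₀) x)) ∧
    fderiv ℝ (fun θ' => QΩ θ' s₀ ω₀) θ =
      ∑ x : S × Ω, (∑' k : ℕ, Pk θ k (s₀, ω₀) x) •
        ((fderiv ℝ (fun a => QU θ x.1 x.2 a) (μ θ x.2 x.1)).comp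
          (fderiv ℝ (fun θ' => μ θ' x.2 x.1) θ)) := by
  have hw_nonneg : ∀ ω s' ω', 0 ≤
      (1 - β ω s') * (if ω' = ω then (1 : ℝ) else 0) + β ω s' * πΩ s' ω' := by
    intro ω s' ω'
    have h1 := hβ1 ω s'
    refine add_nonneg (mul_nonneg (by linarith) (by split_ifs <;> simp))
      (mul_nonneg (hβ0 _ _) (hπ_nonneg _ _))
  have hw_sum : ∀ ω s', ∑ ω', ((1 - β ω s') * (if ω' = ω then (1 : ℝ) else 0) +
      β ω s' * πΩ s' ω') = 1 := by
    intro ω s'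
    rw [Finset.sum_add_distrib, ← Finset.mul_sum, ← Finset.mul_sum, hπ_sum]
    simp
  have hK : ∀ x y, 0 ≤ P1 θ x y := by
    rintro ⟨s, ω⟩ ⟨s', ω'⟩
    rw [hP1]
    exact mul_nonneg (mul_nonneg hγ0 (hp_nonneg _ _ _)) (hw_nonneg _ _ _)
  have hrow : ∀ x, ∑ y, P1 θ x y ≤ γ := by
    rintro ⟨s, ω⟩
    rw [Fintype.sum_prod_type]
    simp_rw [hP1, ← Finset.mul_sum, hw_sum, mul_one, ← Finset.mul_sum, hp_sum, mul_one]
    exact le_rfl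
  have h0 : ∀ x y, Pk θ 0 x y = if x = y then 1 else 0 := by
    rintro ⟨s, ω⟩ ⟨s', ω'⟩
    simp [hPk0]
  have hDU : ∀ ω s', fderiv ℝ (fun θ' => U θ' ω s') θ =
      ∑ ω', ((1 - β ω s') * (if ω' = ω then (1 : ℝ) else 0) + β ω s' * πΩ s' ω') •
        fderiv ℝ (fun θ' => QΩ θ' s' ω') θ := by
    intro ω s'
    have hQ := fun ω' => (hQΩ_diff s' ω' θ).hasFDerivAt
    have hfun : (fun θ' => U θ' ω s') = fun θ' => ∑ ω',
        ((1 - β ω s') * (if ω' = ω then (1 : ℝ) else 0) + β ω s' * πΩ s' ω') * QΩ θ' s' ω' := by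
      funext θ'
      rw [hU, hVΩ]
      simp [add_mul, Finset.sum_add_distrib, Finset.mul_sum, mul_assoc]
    rw [hfun]
    exact (HasFDerivAt.fun_sum fun ω' _ => (hQ ω').const_mul _).fderiv
  have hD : ∀ x : S × Ω, fderiv ℝ (fun θ' => QΩ θ' x.1 x.2) θ =
      ((fderiv ℝ (fun a => QU θ x.1 x.2 a) (μ θ x.2 x.1)).comp
          (fderiv ℝ (fun θ' => μ θ' x.2 x.1) θ)) +
        ∑ y, P1 θ x y • fderiv ℝ (fun θ' => QΩ θ' y.1 y.2) θ := by
    rintro ⟨s, ω⟩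
    have hb := bellman_fderiv γ (hr_diff s) (hp_diff s) (hμ_diff ω s) (hU_diff ω) θ
    simp_rw [hDU, Finset.smul_sum, smul_smul] at hb
    simp_rw [Fintype.sum_prod_type, hP1, hQΩ _ s ω, hQU]
    exact hb
  exact neumann_series_of_fixed_point hK hrow h0 (hPkS θ) hγ0 hγ1
    (fun x : S × Ω => fderiv ℝ (fun θ' => QΩ θ' x.1 x.2) θ) _ hD (s₀, ω₀)
end

section
/- Gradient recursion for the option value (Equation 12): for every θ ∈ ℝ^d and every (s, ω) ∈ S × Ω, the Fréchet derivative of θ ↦ Q_Ω θ s ω equals (D_a Q_U θ s ω a |_{a = μ θ ω s}) ∘ (D_θ (μ · ω s) at θ) + ∑_{(s',ω') ∈ S×Ω} P¹_θ((s,ω),(s',ω')) • D_θ (Q_Ω · s' ω') at θ. -/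
/-!
Freeze the parameter of `QU` at `θ` and absorb the error into a sum:
`QΩ θ' s ω = QU θ s ω (μ θ' ω s) + ∑ s', γ p(s' | s, μ θ' ω s) (U θ' ω s' - U θ ω s')`.
The first term contributes the chain-rule term. In each summand the second factor vanishes at
`θ' = θ`, so the product rule leaves only `γ p(s' | s, μ θ ω s) • D U`, and the transition kernel is
never differentiated. Finally `U θ ω s'` is the average of `QΩ θ s' ω'` over the next option `ω'`, with
weights `(1 - β ω s') [ω' = ω] + β ω s' πΩ s' ω'`, which turns the sum over `s'` into the sum against
`P1` over `S × Ω`.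
-/

/-- **Gradient recursion for the option value (Equation 12).**
For every `θ` and `(s, ω)`, the Fréchet derivative of `θ ↦ Q_Ω θ s ω` equals
`(D_a Q_U θ s ω a |_{a = μ θ ω s}) ∘ (D_θ (μ · ω s)) + ∑_{(s',ω')} P¹_θ((s,ω),(s',ω')) • D_θ (Q_Ω · s' ω')`. -/
theorem gradient_recursion_option_value
    {S : Type*} {Ω : Type*} [Fintype S] [Fintype Ω] [Nonempty S] [Nonempty Ω]
    [DecidableEq S] [DecidableEq Ω]
    {A : Type*} [NormedAddCommGroup A] [NormedSpace ℝ A] [FiniteDimensional ℝ A]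
    (d : ℕ)
    (p : S → A → S → ℝ)
    (hp_nonneg : ∀ s a s', 0 ≤ p s a s')
    (hp_sum : ∀ s a, ∑ s', p s a s' = 1)
    (r : S → A → ℝ)
    (γ : ℝ) (hγ0 : 0 ≤ γ) (hγ1 : γ < 1)
    (πΩ : S → Ω → ℝ)
    (hπ_nonneg : ∀ s ω, 0 ≤ πΩ s ω)
    (hπ_sum : ∀ s, ∑ ω, πΩ s ω = 1)
    (β : Ω → S → ℝ)
    (hβ0 : ∀ ω s, 0 ≤ β ω s) (hβ1 : ∀ ω s, β ω s ≤ 1)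
    (μ : (Fin d → ℝ) → Ω → S → A)
    (hμ_diff : ∀ ω s, Differentiable ℝ (fun θ => μ θ ω s))
    (hr_diff : ∀ s, Differentiable ℝ (fun a => r s a))
    (hp_diff : ∀ s s', Differentiable ℝ (fun a => p s a s'))
    (QΩ : (Fin d → ℝ) → S → Ω → ℝ)
    (QU : (Fin d → ℝ) → S → Ω → A → ℝ)
    (U : (Fin d → ℝ) → Ω → S → ℝ)
    (VΩ : (Fin d → ℝ) → S → ℝ)
    (hQΩ : ∀ θ s ω, QΩ θ s ω = QU θ s ω (μ θ ω s))
    (hQU : ∀ θ s ω a, QU θ s ω a = r s a + γ * ∑ s', p s a s' * U θ ω s')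
    (hU : ∀ θ ω s', U θ ω s' = (1 - β ω s') * QΩ θ s' ω + β ω s' * VΩ θ s')
    (hVΩ : ∀ θ s, VΩ θ s = ∑ ω, πΩ s ω * QΩ θ s ω)
    (hQΩ_diff : ∀ s ω, Differentiable ℝ (fun θ => QΩ θ s ω))
    (hU_diff : ∀ ω s, Differentiable ℝ (fun θ => U θ ω s))
    (hQU_diff : ∀ θ s ω, Differentiable ℝ (fun a => QU θ s ω a))
    (P1 : (Fin d → ℝ) → (S × Ω) → (S × Ω) → ℝ)
    (hP1 : ∀ θ s ω s' ω', P1 θ (s, ω) (s', ω') =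
      γ * p s (μ θ ω s) s' *
        ((1 - β ω s') * (if ω' = ω then (1 : ℝ) else 0) + β ω s' * πΩ s' ω'))
    (θ : Fin d → ℝ) (s : S) (ω : Ω) :
    fderiv ℝ (fun θ' => QΩ θ' s ω) θ =
      (fderiv ℝ (fun a => QU θ s ω a) (μ θ ω s)).comp
        (fderiv ℝ (fun θ' => μ θ' ω s) θ) +
      ∑ x : S × Ω, P1 θ (s, ω) x • fderiv ℝ (fun θ' => QΩ θ' x.1 x.2) θ := by
  -- `U` is the average of `QΩ` over the option chosen on arrival
  have hU_avg : ∀ θ' s', U θ' ω s' =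
      ∑ ω', ((1 - β ω s') * (if ω' = ω then (1 : ℝ) else 0) + β ω s' * πΩ s' ω') *
        QΩ θ' s' ω' := by
    intro θ' s'
    rw [hU, hVΩ]
    simp [add_mul, Finset.sum_add_distrib, Finset.mul_sum, mul_assoc]
  have hU_fderiv : ∀ s', HasFDerivAt (fun θ' => U θ' ω s')
      (∑ ω', ((1 - β ω s') * (if ω' = ω then (1 : ℝ) else 0) + β ω s' * πΩ s' ω') •
        fderiv ℝ (fun θ' => QΩ θ' s' ω') θ) θ := by
    intro s'
    simp only [hU_avg]
    exact HasFDerivAt.fun_sum fun ω' _ => ((hQΩ_diff s' ω') θ).hasFDerivAt.const_mul _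
  have hQ_split : (fun θ' => QΩ θ' s ω) = fun θ' => QU θ s ω (μ θ' ω s) +
      ∑ s', (γ * p s (μ θ' ω s) s') * (U θ' ω s' - U θ ω s') := by
    funext θ'
    rw [hQΩ, hQU, hQU, add_assoc, Finset.mul_sum, Finset.mul_sum, ← Finset.sum_add_distrib]
    congr 1
    exact Finset.sum_congr rfl fun s' _ => by ring
  have h_chain : HasFDerivAt (fun θ' => QU θ s ω (μ θ' ω s))
      ((fderiv ℝ (fun a => QU θ s ω a) (μ θ ω s)).comp
        (fderiv ℝ (fun θ' => μ θ' ω s) θ)) θ :=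
    (hQU_diff θ s ω (μ θ ω s)).hasFDerivAt.comp θ (hμ_diff ω s θ).hasFDerivAt
  have h_prod : ∀ s', HasFDerivAt
      (fun θ' => (γ * p s (μ θ' ω s) s') * (U θ' ω s' - U θ ω s'))
      ((γ * p s (μ θ ω s) s') •
        ∑ ω', ((1 - β ω s') * (if ω' = ω then (1 : ℝ) else 0) + β ω s' * πΩ s' ω') •
          fderiv ℝ (fun θ' => QΩ θ' s' ω') θ) θ := by
    intro s'
    have hp : DifferentiableAt ℝ (fun θ' => γ * p s (μ θ' ω s) s') θ :=
      (((hp_diff s s').comp (hμ_diff ω s)) θ).const_mul γ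
    have h := hp.hasFDerivAt.mul ((hU_fderiv s').sub_const (U θ ω s'))
    rw [sub_self, zero_smul, add_zero] at h
    exact h
  rw [hQ_split, (h_chain.fun_add (HasFDerivAt.fun_sum fun s' _ => h_prod s')).fderiv,
    Fintype.sum_prod_type]
  simp only [hP1, Finset.smul_sum, smul_smul]
end

section
/- Solution of a γ-contractive affine recursion by the discounted occupancy series: let I be a nonempty finite type, E a real Banach space, γ ∈ [0,1), P : I → I → ℝ with P i j ≥ 0 and ∑_{j} P i j ≤ γ for all i, and define P⁰ i j = [i = j], P^{k+1} i j = ∑_{l} P i l · P^k l j. If c, g : I → E satisfy g i = c i + ∑_{j} P i j • g j for all i, then for every i the family (k,j) ↦ P^k i j • c j is summable and g i = ∑_{k=0}^∞ ∑_{j ∈ I} P^k i j • c j. -/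
/-!
Unrolling the recursion `n` times gives, for every `n`,
`g i = ∑_{k < n} ∑_j P^k i j • c j + ∑_j P^n i j • g j`.
The entries of `P^k` are nonnegative with row sums at most `γ ^ k`, so each entry lies in
`[0, γ ^ k]`. Comparison with the summable family `γ ^ k * ‖c j‖` gives absolute convergence of the
double series, and the remainder has norm at most `γ ^ n * ∑_j ‖g j‖`, which tends to `0`. Hence
the partial sums converge both to the sum of the series and to `g i`.
-/

/-- **Solution of a γ-contractive affine recursion by the discounted occupancy series.**
If `g i = c i + ∑_j P i j • g j` for all `i`, with `P` nonnegative of row mass `≤ γ < 1`,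
then for every `i` the family `(k,j) ↦ P^k i j • c j` is summable and
`g i = ∑'_{k} ∑_{j} P^k i j • c j`. -/
theorem affine_recursion_series_solution
    {I : Type*} [Fintype I] [Nonempty I] [DecidableEq I]
    {E : Type*} [NormedAddCommGroup E] [NormedSpace ℝ E] [CompleteSpace E]
    (γ : ℝ) (hγ0 : 0 ≤ γ) (hγ1 : γ < 1)
    (P : I → I → ℝ)
    (hP_nonneg : ∀ i j, 0 ≤ P i j)
    (hP_mass : ∀ i, ∑ j, P i j ≤ γ)
    (Pk : ℕ → I → I → ℝ)
    (hPk0 : ∀ i j, Pk 0 i j = if i = j then (1 : ℝ) else 0)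
    (hPkS : ∀ k i j, Pk (k + 1) i j = ∑ l, P i l * Pk k l j)
    (c g : I → E)
    (hg : ∀ i, g i = c i + ∑ j, P i j • g j) :
    ∀ i, Summable (fun kj : ℕ × I => Pk kj.1 i kj.2 • c kj.2) ∧
      g i = ∑' k : ℕ, ∑ j, Pk k i j • c j := by
  have hnn : ∀ k i j, 0 ≤ Pk k i j := by
    intro k
    induction k with
    | zero => intro i j; rw [hPk0]; split_ifs <;> norm_num
    | succ k ih =>
      intro i j
      rw [hPkS]
      exact Finset.sum_nonneg fun l _ => mul_nonneg (hP_nonneg i l) (ih l j)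
  have hmass : ∀ k i, ∑ j, Pk k i j ≤ γ ^ k := by
    intro k
    induction k with
    | zero => intro i; simp [hPk0]
    | succ k ih =>
      intro i
      calc ∑ j, Pk (k + 1) i j = ∑ l, P i l * ∑ j, Pk k l j := by
            simp only [hPkS, Finset.mul_sum]
            exact Finset.sum_comm
        _ ≤ ∑ l, P i l * γ ^ k :=
            Finset.sum_le_sum fun l _ => mul_le_mul_of_nonneg_left (ih l) (hP_nonneg i l)
        _ = (∑ l, P i l) * γ ^ k := by rw [Finset.sum_mul]
        _ ≤ γ * γ ^ k := mul_le_mul_of_nonneg_right (hP_mass i) (pow_nonneg hγ0 k)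
        _ = γ ^ (k + 1) := by ring
  have hentry : ∀ k i j, Pk k i j ≤ γ ^ k := fun k i j =>
    (Finset.single_le_sum (f := fun j => Pk k i j) (fun l _ => hnn k i l)
      (Finset.mem_univ j)).trans (hmass k i)
  have hnorm : ∀ (v : I → E) k i j, ‖Pk k i j • v j‖ ≤ γ ^ k * ‖v j‖ := by
    intro v k i j
    rw [norm_smul, Real.norm_of_nonneg (hnn k i j)]
    exact mul_le_mul_of_nonneg_right (hentry k i j) (norm_nonneg _)
  have hact : ∀ (v : I → E) k i,
      ∑ j, Pk (k + 1) i j • v j = ∑ l, P i l • ∑ j, Pk k l j • v j := by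
    intro v k i
    simp only [hPkS, Finset.sum_smul, Finset.smul_sum, mul_smul]
    exact Finset.sum_comm
  have hunroll : ∀ n i, g i =
      ∑ k ∈ Finset.range n, ∑ j, Pk k i j • c j + ∑ j, Pk n i j • g j := by
    intro n
    induction n with
    | zero => intro i; simp [hPk0]
    | succ n ih =>
      intro i
      -- `P^(k+1) = P * P^k` peels off the first factor, so the `k = 0` term is split off and the
      -- induction hypothesis is used inside the sum over the first step.
      have h0 : ∑ j, Pk 0 i j • c j = c i := by simp [hPk0]
      have h1 : ∑ l, P i l • g l = ∑ l, P i l •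
          (∑ k ∈ Finset.range n, ∑ j, Pk k l j • c j + ∑ j, Pk n l j • g j) :=
        Finset.sum_congr rfl fun l _ => congrArg (P i l • ·) (ih l)
      have h2 : ∑ l, P i l • ∑ k ∈ Finset.range n, ∑ j, Pk k l j • c j =
          ∑ k ∈ Finset.range n, ∑ j, Pk (k + 1) i j • c j := by
        simp only [hact]
        rw [Finset.sum_comm]
        exact Finset.sum_congr rfl fun l _ => Finset.smul_sum
      rw [Finset.sum_range_succ', h0, hact g, ← h2, hg i, h1]
      simp only [smul_add, Finset.sum_add_distrib]
      abel
  intro i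
  have hsum : Summable (fun kj : ℕ × I => Pk kj.1 i kj.2 • c kj.2) := by
    have hb : Summable (fun kj : ℕ × I => γ ^ kj.1 * ‖c kj.2‖) :=
      (summable_geometric_of_lt_one hγ0 hγ1).mul_of_nonneg
        (hasSum_fintype fun j => ‖c j‖).summable
        (fun k => pow_nonneg hγ0 k) (fun j => norm_nonneg _)
    exact Summable.of_norm_bounded hb fun kj => hnorm c kj.1 i kj.2
  refine ⟨hsum, ?_⟩
  have hout : Summable (fun k : ℕ => ∑ j, Pk k i j • c j) := by
    simpa only [tsum_fintype] using hsum.prod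
  have hrem : Filter.Tendsto (fun n => ∑ j, Pk n i j • g j) Filter.atTop (nhds 0) := by
    refine squeeze_zero_norm (a := fun n => γ ^ n * ∑ j, ‖g j‖) (fun n => ?_) ?_
    · rw [Finset.mul_sum]
      exact norm_sum_le_of_le _ fun j _ => hnorm g n i j
    · simpa using (tendsto_pow_atTop_nhds_zero_of_lt_one hγ0 hγ1).mul_const (∑ j, ‖g j‖)
  have hlim := hout.hasSum.tendsto_sum_nat.add hrem
  simp only [← hunroll _ i, add_zero] at hlim
  exact tendsto_nhds_unique tendsto_const_nhds hlim
end

section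
/- Existence and uniqueness of the option-value function with deterministic intra-option policies: there exists a unique function Q : S → Ω → ℝ satisfying, for all s ∈ S and ω ∈ Ω, Q s ω = r s (μ ω s) + γ · ∑_{s' ∈ S} p s (μ ω s) s' · ((1 − β ω s') · Q s' ω + β ω s' · ∑_{ω' ∈ Ω} π_Ω s' ω' · Q s' ω'). -/
/-!
The right-hand side of the Bellman equation defines an operator `T` on `S → Ω → ℝ`, which is a
complete metric space for the sup distance. Each entry of `T Q - T Q'` is `γ` times an iterated
weighted average (over next states, over continuing or terminating, over next options) of entries
of `Q - Q'`, and a weighted average does not exceed the largest absolute value of its terms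
(`abs_weighted_sum_le`). Hence `T` is a `γ`-contraction, and Banach's fixed point theorem gives
exactly one fixed point.
-/

lemma abs_weighted_sum_le {ι : Type*} [Fintype ι] {w x : ι → ℝ} {M : ℝ}
    (hw : ∀ i, 0 ≤ w i) (hsum : ∑ i, w i = 1) (hx : ∀ i, |x i| ≤ M) :
    |∑ i, w i * x i| ≤ M := by
  calc |∑ i, w i * x i| ≤ ∑ i, |w i * x i| := Finset.abs_sum_le_sum_abs _ _
    _ ≤ ∑ i, w i * M := by
        refine Finset.sum_le_sum fun i _ => ?_
        rw [abs_mul, abs_of_nonneg (hw i)]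
        exact mul_le_mul_of_nonneg_left (hx i) (hw i)
    _ = M := by rw [← Finset.sum_mul, hsum, one_mul]

/-- **Existence and uniqueness of the option-value function with deterministic
intra-option policies.** There exists a unique `Q : S → Ω → ℝ` satisfying the
option-value Bellman equation. -/
theorem option_value_exists_unique
    {S : Type*} {Ω : Type*} [Fintype S] [Fintype Ω] [Nonempty S] [Nonempty Ω]
    {A : Type*} [NormedAddCommGroup A] [NormedSpace ℝ A] [FiniteDimensional ℝ A]
    (p : S → A → S → ℝ)
    (hp_nonneg : ∀ s a s', 0 ≤ p s a s')
    (hp_sum : ∀ s a, ∑ s', p s a s' = 1)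
    (r : S → A → ℝ)
    (γ : ℝ) (hγ0 : 0 ≤ γ) (hγ1 : γ < 1)
    (πΩ : S → Ω → ℝ)
    (hπ_nonneg : ∀ s ω, 0 ≤ πΩ s ω)
    (hπ_sum : ∀ s, ∑ ω, πΩ s ω = 1)
    (β : Ω → S → ℝ)
    (hβ0 : ∀ ω s, 0 ≤ β ω s) (hβ1 : ∀ ω s, β ω s ≤ 1)
    (μ : Ω → S → A) :
    ∃! Q : S → Ω → ℝ, ∀ s ω,
      Q s ω = r s (μ ω s) +
        γ * ∑ s', p s (μ ω s) s' *
          ((1 - β ω s') * Q s' ω + β ω s' * ∑ ω', πΩ s' ω' * Q s' ω') := by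
  let T : (S → Ω → ℝ) → S → Ω → ℝ := fun Q s ω =>
    r s (μ ω s) + γ * ∑ s', p s (μ ω s) s' *
      ((1 - β ω s') * Q s' ω + β ω s' * ∑ ω', πΩ s' ω' * Q s' ω')
  have hT : ContractingWith ⟨γ, hγ0⟩ T := by
    refine ⟨by exact_mod_cast hγ1, LipschitzWith.of_dist_le_mul fun Q Q' => ?_⟩
    change dist (T Q) (T Q') ≤ γ * dist Q Q'
    have hQ : ∀ s ω, |Q s ω - Q' s ω| ≤ dist Q Q' := fun s ω => by
      rw [← Real.dist_eq]
      exact (dist_le_pi_dist (Q s) (Q' s) ω).trans (dist_le_pi_dist Q Q' s)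
    have hM : 0 ≤ γ * dist Q Q' := mul_nonneg hγ0 dist_nonneg
    refine (dist_pi_le_iff hM).2 fun s => (dist_pi_le_iff hM).2 fun ω => ?_
    have hdiff : T Q s ω - T Q' s ω = γ * ∑ s', p s (μ ω s) s' *
        ((1 - β ω s') * (Q s' ω - Q' s' ω) +
          β ω s' * ∑ ω', πΩ s' ω' * (Q s' ω' - Q' s' ω')) := by
      simp only [T]
      rw [add_sub_add_left_eq_sub, ← mul_sub, ← Finset.sum_sub_distrib]
      congr 1
      refine Finset.sum_congr rfl fun s' _ => ?_
      simp only [mul_sub, Finset.sum_sub_distrib]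
      ring
    rw [Real.dist_eq, hdiff, abs_mul, abs_of_nonneg hγ0]
    refine mul_le_mul_of_nonneg_left
      (abs_weighted_sum_le (hp_nonneg s _) (hp_sum s _) fun s' => ?_) hγ0
    have hV := abs_le.1 (abs_weighted_sum_le (hπ_nonneg s') (hπ_sum s') (hQ s'))
    have hC := abs_le.1 (hQ s' ω)
    have h0 := hβ0 ω s'
    have h1 : 0 ≤ 1 - β ω s' := sub_nonneg.2 (hβ1 ω s')
    rw [abs_le]
    -- The interval is convex, so it contains the mixture with weights `1 - β` and `β`.
    constructor <;>
      linarith [mul_le_mul_of_nonneg_left hV.1 h0, mul_le_mul_of_nonneg_left hV.2 h0,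
        mul_le_mul_of_nonneg_left hC.1 h1, mul_le_mul_of_nonneg_left hC.2 h1]
  refine ⟨hT.fixedPoint T, fun s ω => ?_, fun Q hQ => hT.fixedPoint_unique ?_⟩
  · exact (congrFun (congrFun hT.fixedPoint_isFixedPt s) ω).symm
  · exact funext fun s => funext fun ω => (hQ s ω).symm
end
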